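/- arXiv:1410.4118 — 2 statements merged into one kernel-verified Lean document; each statement's English description precedes it below -/
import Mathlib

section
/- Let W > 0 and let G be a graph with ω(G) ≤ W. Let (A, B) be a partition of V(G) such that: A is a stable set; every vertex in B has a neighbour in A; and there is a cograph H with vertex set A such that for every induced path P of G with both endpoints in A (distinct) and interior disjoint from A, the endpoints of P are adjacent in H if and only if P has odd length. Then there is a partition (X, Y) of B such that every clique of size W contained in B intersects both X and Y. -/
/-
Only induced paths of length at most four matter. Write `N v` for the set of neighbours of `v` in
`A`. Paths of length two make each `N v` stable in `H`, those of length three make `N u \ N v` and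
`N v \ N u` complete to each other in `H` when `u` and `v` are adjacent, and those of length four
give a dual condition for two-edge paths. No clique of size `W` has a common neighbour in `A`.
Now build the colouring along the cotree of `H`. If `S = T ∪ T'` with `T` anticomplete to `T'`, the
sets `N c`, for `c` in a largest clique, all lie on the same side, so the two colourings can be
juxtaposed. If `T` is complete to `T'`, each `N c` lies on one side; a vertex with `N c ⊆ T` is
recoloured when it sees a vertex with `N w ⊆ T'`, and vice versa. This splits every clique using
both sides, and the cliques using one side only are unaffected. Compactness removes finiteness.
-/

open SimpleGraph

universe u

variable {V : Type u}

/-- The independence (stability) number of a graph. -/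
noncomputable def indepNum (G : SimpleGraph V) : ℕ :=
  sSup {n | ∃ s : Finset V, s.card = n ∧ ∀ x ∈ s, ∀ y ∈ s, x ≠ y → ¬ G.Adj x y}

/-- A walk is induced: any edge of `G` between vertices of the walk is an edge of the walk. -/
def IsInducedWalk (G : SimpleGraph V) {u v : V} (p : G.Walk u v) : Prop :=
  ∀ x ∈ p.support, ∀ y ∈ p.support, G.Adj x y → p.toSubgraph.Adj x y

/-- An induced path. -/
def IsInducedPath (G : SimpleGraph V) {u v : V} (p : G.Walk u v) : Prop :=
  p.IsPath ∧ IsInducedWalk G p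

/-- An odd hole: an induced cycle of odd length at least 5. -/
def HasOddHole (G : SimpleGraph V) : Prop :=
  ∃ (v : V) (p : G.Walk v v), p.IsCycle ∧ IsInducedWalk G p ∧ Odd p.length ∧ 5 ≤ p.length

/-- A cograph: no induced path on four vertices. -/
def IsCograph (G : SimpleGraph V) : Prop :=
  ¬ ∃ a b c d : V, a ≠ c ∧ a ≠ d ∧ b ≠ d ∧
    G.Adj a b ∧ G.Adj b c ∧ G.Adj c d ∧ ¬ G.Adj a c ∧ ¬ G.Adj a d ∧ ¬ G.Adj b d

/-- A levelling `(L 0, …, L k)` in `G`. -/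
def IsLevelling (G : SimpleGraph V) (k : ℕ) (L : ℕ → Set V) : Prop :=
  (∀ i j, i ≤ k → j ≤ k → i ≠ j → Disjoint (L i) (L j)) ∧
  (∃ x, L 0 = {x}) ∧
  (∀ i, 1 ≤ i → i ≤ k → ∀ v ∈ L i,
     (∃ u ∈ L (i - 1), G.Adj u v) ∧ (∀ h, h + 1 < i → ∀ u ∈ L h, ¬ G.Adj u v))

/-- The interior (internal vertices) of a walk is contained in `S`. -/
def InteriorIn (G : SimpleGraph V) {u v : V} (p : G.Walk u v) (S : Set V) : Prop :=
  ∀ x ∈ p.support, x ≠ u → x ≠ v → x ∈ S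

/-- The union `L 0 ∪ ⋯ ∪ L (k-1)`. -/
def lowerLevels (L : ℕ → Set V) (k : ℕ) : Set V := ⋃ i ∈ Finset.range k, L i

/-- There is an odd induced path between `u` and `v` with interior in the lower levels. -/
def OddConn (G : SimpleGraph V) (L : ℕ → Set V) (k : ℕ) (u v : V) : Prop :=
  u ≠ v ∧ ∃ p : G.Walk u v, IsInducedPath G p ∧ Odd p.length ∧
    InteriorIn G p (lowerLevels L k)

/-- `w ∈ L (i+1)` is a dependent of `u ∈ L i`: `u` is its only parent. -/
def IsDependent (G : SimpleGraph V) (L : ℕ → Set V) (i : ℕ) (u w : V) : Prop :=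
  w ∈ L (i + 1) ∧ G.Adj u w ∧ ∀ x ∈ L i, G.Adj x w → x = u

section Cograph

variable {α : Type*} {H : SimpleGraph α} {S T T' : Set α} {v z : α}

theorem IsCograph.compl (hH : IsCograph H) : IsCograph Hᶜ := by
  rintro ⟨a, b, c, d, hac, had, hbd, hab, hbc, hcd, hac', had', hbd'⟩
  simp only [compl_adj, not_and, not_not] at hab hbc hcd hac' had' hbd'
  exact hH ⟨b, d, a, c, hab.1.symm, hbc.1, hcd.1.symm, hbd' hbd, (had' had).symm, hac' hac,
    fun h => hab.2 h.symm, hbc.2, fun h => hcd.2 h.symm⟩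

/-- The subgraph of `H` induced on `S` is the join of two smaller ones. Taken in `Hᶜ`, this says
that `S` is the disjoint union of two nonempty sets that are anticomplete to each other in `H`. -/
def IsJoin (H : SimpleGraph α) (S : Set α) : Prop :=
  ∃ T T', T.Nonempty ∧ T'.Nonempty ∧ T ∪ T' = S ∧ H.IsCompleteBetween T T'

theorem isJoin_insert_of_forall_adj (hS : S.Nonempty) (hv : ∀ y ∈ S, H.Adj v y) :
    IsJoin H (insert v S) :=
  ⟨{v}, S, Set.singleton_nonempty v, hS, rfl, by rintro _ rfl; exact hv⟩

theorem IsCograph.isJoin_insert_union (hH : IsCograph H) (hT' : T'.Nonempty)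
    (hTT' : H.IsCompleteBetween T T') (hvT : v ∉ T) (hvT' : v ∉ T') (hz : z ∈ T)
    (hvz : H.Adj v z) : IsJoin H (insert v (T ∪ T')) := by
  by_cases hv : ∀ x ∈ T', H.Adj v x
  · refine ⟨insert v T, T', Set.insert_nonempty v T, hT', Set.insert_union, ?_⟩
    rintro t (rfl | ht) x hx
    exacts [hv x hx, hTT' ht hx]
  push Not at hv
  obtain ⟨x, hx, hvx⟩ := hv
  refine ⟨{t ∈ T | H.Adj v t}, insert v ({t ∈ T | ¬ H.Adj v t} ∪ T'), ⟨z, hz, hvz⟩,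
    Set.insert_nonempty _ _, ?_, ?_⟩
  · ext y
    simp only [Set.mem_union, Set.mem_insert_iff, Set.mem_ofPred_eq]
    tauto
  rintro t ⟨ht, hvt⟩ y (rfl | ⟨hy, hvy⟩ | hy)
  · exact hvt.symm
  · by_contra hty
    -- Otherwise `x`, `v`, `y`, `t` is an induced path of `Hᶜ`.
    refine hH.compl ⟨x, v, y, t, ?_, ?_, hvt.ne, ?_, ?_, ?_, ?_, ?_, ?_⟩ <;>
      grind [compl_adj, adj_comm, SimpleGraph.irrefl, IsCompleteBetween]
  · exact hTT' ht hy

theorem IsCograph.isJoin_insert (hH : IsCograph H) (hS : IsJoin H S) (hvS : v ∉ S) (hz : z ∈ S)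
    (hvz : H.Adj v z) : IsJoin H (insert v S) := by
  obtain ⟨T, T', hT, hT', rfl, hTT'⟩ := hS
  have hvT : v ∉ T := fun h => hvS (.inl h)
  have hvT' : v ∉ T' := fun h => hvS (.inr h)
  rcases hz with hz | hz
  · exact hH.isJoin_insert_union hT' hTT' hvT hvT' hz hvz
  · rw [Set.union_comm]
    exact hH.isJoin_insert_union hT hTT'.symm hvT' hvT hz hvz

theorem IsCograph.isJoin_or_isJoin_compl (hH : IsCograph H) (hS : S.Finite)
    (hS' : S.Nontrivial) : IsJoin H S ∨ IsJoin Hᶜ S := by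
  induction S, hS using Set.Finite.induction_on with
  | empty => exact absurd hS' Set.not_nontrivial_empty
  | @insert v S hvS _ ih =>
    have hS : S.Nonempty := by
      rw [Set.nonempty_iff_ne_empty]
      rintro rfl
      simp at hS'
    have hne {y : α} (hy : y ∈ S) : v ≠ y := fun h => hvS (h ▸ hy)
    by_cases hall : ∀ y ∈ S, H.Adj v y
    · exact .inl (isJoin_insert_of_forall_adj hS hall)
    by_cases hnone : ∀ y ∈ S, ¬ H.Adj v y
    · exact .inr (isJoin_insert_of_forall_adj hS fun y hy => ⟨hne hy, hnone y hy⟩)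
    push Not at hall hnone
    obtain ⟨w, hw, hvw⟩ := hall
    obtain ⟨z, hz, hvz⟩ := hnone
    have hzw : z ≠ w := by
      rintro rfl
      exact hvw hvz
    exact (ih ⟨z, hz, w, hw, hzw⟩).imp
      (fun h => hH.isJoin_insert h hvS hz hvz)
      (fun h => hH.compl.isJoin_insert h hvS hw ⟨hne hw, hvw⟩)

theorem IsJoin.exists_ssubset (hS : IsJoin H S) :
    ∃ T ⊂ S, ∃ T' ⊂ S, T ∪ T' = S ∧ H.IsCompleteBetween T T' := by
  obtain ⟨T, T', ⟨t, ht⟩, ⟨t', ht'⟩, rfl, hTT'⟩ := hS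
  have hdisj := hTT'.disjoint
  have hT : T ⊂ T ∪ T' := Set.ssubset_iff_exists.2
    ⟨Set.subset_union_left, t', .inr ht', hdisj.notMem_of_mem_right ht'⟩
  have hT' : T' ⊂ T ∪ T' := Set.ssubset_iff_exists.2
    ⟨Set.subset_union_right, t, .inl ht, hdisj.notMem_of_mem_left ht⟩
  exact ⟨T, hT, T', hT', rfl, hTT'⟩

theorem IsCograph.finite_induction (hH : IsCograph H) {motive : Set α → Prop}
    (subsingleton : ∀ S, S.Subsingleton → motive S)
    (join : ∀ T T', H.IsCompleteBetween T T' → motive T → motive T' → motive (T ∪ T'))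
    (union : ∀ T T', Hᶜ.IsCompleteBetween T T' → motive T → motive T' → motive (T ∪ T'))
    (hS : S.Finite) : motive S := by
  induction hn : S.ncard using Nat.strong_induction_on generalizing S with
  | _ n ih =>
    have ih' (T : Set α) (hT : T ⊂ S) : motive T :=
      ih _ (hn ▸ Set.ncard_lt_ncard hT hS) (hS.subset hT.subset) rfl
    rcases S.subsingleton_or_nontrivial with hS' | hS'
    · exact subsingleton S hS'
    rcases hH.isJoin_or_isJoin_compl hS hS' with h | h
    all_goals obtain ⟨T, hT, T', hT', rfl, hTT'⟩ := h.exists_ssubset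
    · exact join T T' hTT' (ih' T hT) (ih' T' hT')
    · exact union T T' hTT' (ih' T hT) (ih' T' hT')

end Cograph

section ParitySystem

variable {α β : Type*} {G : SimpleGraph β} {H : SimpleGraph α} {N : β → Set α} {W : ℕ}
  {C : Finset β} {S T T' : Set α} {X Y : Set β}

/-- The constraints that the parities of induced paths of lengths two, three and four impose on the
sets `N v` of neighbours in `A`, where `H` records the parities. The middle vertex in `path` is
required to have a neighbour in `A` because it could otherwise itself be a vertex of `A`. -/
structure IsParitySystem (G : SimpleGraph β) (H : SimpleGraph α) (N : β → Set α) : Prop where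
  isIndepSet : ∀ v, H.IsIndepSet (N v)
  edge : ∀ ⦃u v⦄, G.Adj u v → H.IsCompleteBetween (N u \ N v) (N v \ N u)
  path : ∀ ⦃u v w⦄, G.Adj u v → G.Adj v w → u ≠ w → ¬ G.Adj u w → (N v).Nonempty →
    Hᶜ.IsCompleteBetween (N u \ (N v ∪ N w)) (N w \ (N u ∪ N v))

/-- The vertices with a neighbour in `A` all of whose neighbours in `A` lie in `S`. -/
def attachedTo (N : β → Set α) (S : Set α) : Set β := {v | (N v).Nonempty ∧ N v ⊆ S}

/-- The two-colouring with colour classes `X` and `Xᶜ` uses both colours on `C`. -/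
def Splits (X : Set β) (C : Finset β) : Prop := (∃ x ∈ C, x ∈ X) ∧ ∃ y ∈ C, y ∉ X

/-- The induction hypothesis along the cotree of `H`: the colouring `X` is correct for the cliques
of size `W` that are attached to `S` only. -/
def SplitsCliques (G : SimpleGraph β) (N : β → Set α) (W : ℕ) (S : Set α) (X : Set β) : Prop :=
  ∀ C : Finset β, G.IsNClique W C → ↑C ⊆ attachedTo N S → Splits X C

theorem Splits.congr (hX : Splits X C) (hXY : ∀ c ∈ C, c ∈ X ↔ c ∈ Y) : Splits Y C := by
  obtain ⟨⟨x, hx, hxX⟩, y, hy, hyX⟩ := hX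
  exact ⟨⟨x, hx, (hXY x hx).1 hxX⟩, y, hy, fun h => hyX ((hXY y hy).2 h)⟩

theorem exists_not_adj_of_cliqueFree {n : ℕ} (hG : G.CliqueFree (n + 1)) (hC : G.IsNClique n C)
    (v : β) : ∃ c ∈ C, ¬ G.Adj c v := by
  classical
  by_contra! h
  exact hG _ (hC.insert fun c hc => (h c hc).symm)

theorem disjoint_attachedTo (hTT' : Disjoint T T') :
    Disjoint (attachedTo N T) (attachedTo N T') :=
  Set.disjoint_left.2 fun _ ⟨⟨_, hp⟩, hT⟩ ⟨_, hT'⟩ =>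
    Set.disjoint_left.1 hTT' (hT hp) (hT' hp)

namespace IsParitySystem

variable (h : IsParitySystem G H N)
include h

theorem inter (A : Set α) : IsParitySystem G H fun v => N v ∩ A where
  isIndepSet v := (h.isIndepSet v).mono Set.inter_subset_left
  edge u v huv p hp q hq := h.edge huv (by grind) (by grind)
  path u v w huv hvw huw huw' hv p hp q hq :=
    h.path huv hvw huw huw' hv.left (by grind) (by grind)

theorem adj_of_mem_diff (hC : G.IsClique C) {c d : β} (hc : c ∈ C) (hd : d ∈ C) {p q : α}
    (hp : p ∈ N c \ N d) (hq : q ∈ N d \ N c) : H.Adj p q :=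
  h.edge (hC hc hd fun hcd => hp.2 (hcd ▸ hp.1)) hp hq

theorem subset_or_subset (hC : G.IsClique C) {c d v : β} (hc : c ∈ C) (hd : d ∈ C)
    (hcv : N c ⊆ N v) (hdv : N d ⊆ N v) : N c ⊆ N d ∨ N d ⊆ N c := by
  by_contra! hcd
  obtain ⟨p, hp, hpd⟩ := Set.not_subset.1 hcd.1
  obtain ⟨q, hq, hqc⟩ := Set.not_subset.1 hcd.2
  have hpq : H.Adj p q := h.adj_of_mem_diff hC hc hd ⟨hp, hpd⟩ ⟨hq, hqc⟩
  exact h.isIndepSet v (hcv hp) (hdv hq) hpq.ne hpq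

theorem exists_common_of_subset (hC : G.IsClique C) (hne : ∀ c ∈ C, (N c).Nonempty)
    (P : β → Prop) {d v : β} (hd : d ∈ C) (hPd : P d) (hv : v ∈ C) (hPv : ¬ P v)
    (hsub : ∀ c ∈ C, P c → ∀ w ∈ C, ¬ P w → N c ⊆ N w) : ∃ p, ∀ c ∈ C, p ∈ N c := by
  obtain ⟨m, ⟨hm, hPm⟩, hmin⟩ : ∃ m, MinimalFor (fun c => c ∈ C ∧ P c) N m :=
    (C.finite_toSet.subset fun _ hc => hc.1).exists_minimalFor N {c | c ∈ C ∧ P c} ⟨d, hd, hPd⟩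
  obtain ⟨p, hp⟩ := hne m hm
  refine ⟨p, fun c hc => ?_⟩
  by_cases hPc : P c
  · exact (h.subset_or_subset hC hm hc (hsub m hm hPm v hv hPv) (hsub c hc hPc v hv hPv)).elim
      (fun hmc => hmc hp) (fun hcm => hmin ⟨hc, hPc⟩ hcm hp)
  · exact hsub m hm hPm c hc hPc hp

section Anticomplete

variable (hC : G.IsClique C) (hCS : ↑C ⊆ attachedTo N (T ∪ T'))
  (hTT' : Hᶜ.IsCompleteBetween T T') (hno : ¬ ∃ p, ∀ c ∈ C, p ∈ N c)
include hC hCS hTT' hno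

theorem forall_subset_of_anticomplete {d : β} (hd : d ∈ C) (hdT : N d ⊆ T) {c : β} (hc : c ∈ C) :
    N c ⊆ T := by
  by_contra hcT
  refine hno (h.exists_common_of_subset hC (fun c hc => (hCS hc).1) (N · ⊆ T) hd hdT hc hcT ?_)
  intro c hc hcT w hw hwT p hp
  by_contra hpw
  obtain ⟨q, hq, hqT⟩ := Set.not_subset.1 hwT
  have hqT' : q ∈ T' := ((hCS hw).2 hq).resolve_left hqT
  exact (hTT' (hcT hp) hqT').2 (h.adj_of_mem_diff hC hc hw ⟨hp, hpw⟩ ⟨hq, fun hqc => hqT (hcT hqc)⟩)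

theorem exists_subset_or_subset_of_anticomplete (hCne : C.Nonempty) :
    ∃ c ∈ C, N c ⊆ T ∨ N c ⊆ T' := by
  by_contra! hmeet
  obtain ⟨u, hu, hmin⟩ := C.finite_toSet.exists_minimalFor N (C : Set β) hCne
  obtain ⟨p, hp, hpT'⟩ := Set.not_subset.1 (hmeet u hu).2
  obtain ⟨q, hq, hqT⟩ := Set.not_subset.1 (hmeet u hu).1
  have hpT : p ∈ T := ((hCS hu).2 hp).resolve_right hpT'
  have hqT' : q ∈ T' := ((hCS hu).2 hq).resolve_left hqT
  -- By minimality some `r ∈ N v` lies outside `N u`; being adjacent in `H` to every element of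
  -- `N u \ N v`, it would be adjacent to both `p` and `q`.
  have hmem (v : β) (hv : v ∈ C) : p ∈ N v ∨ q ∈ N v := by
    by_contra! hpq
    obtain ⟨r, hr, hru⟩ : ∃ r ∈ N v, r ∉ N u :=
      Set.not_subset.1 fun hvu => hpq.1 (hmin hv hvu hp)
    have hpr := h.adj_of_mem_diff hC hu hv ⟨hp, hpq.1⟩ ⟨hr, hru⟩
    have hqr := h.adj_of_mem_diff hC hu hv ⟨hq, hpq.2⟩ ⟨hr, hru⟩
    rcases (hCS hv).2 hr with hrT | hrT'
    · exact (hTT' hrT hqT').2 hqr.symm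
    · exact (hTT' hpT hrT').2 hpr
  push Not at hno
  obtain ⟨v, hv, hpv⟩ := hno p
  obtain ⟨w, hw, hqw⟩ := hno q
  exact (hTT' hpT hqT').2 (h.adj_of_mem_diff hC hw hv
    ⟨(hmem w hw).resolve_right hqw, hpv⟩ ⟨(hmem v hv).resolve_left hpv, hqw⟩)

theorem subset_attachedTo_or_of_anticomplete :
    ↑C ⊆ attachedTo N T ∨ ↑C ⊆ attachedTo N T' := by
  obtain rfl | hCne := C.eq_empty_or_nonempty
  · simp
  obtain ⟨d, hd, hdT | hdT'⟩ :=
    h.exists_subset_or_subset_of_anticomplete hC hCS hTT' hno hCne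
  · exact .inl fun c hc =>
      ⟨(hCS hc).1, h.forall_subset_of_anticomplete hC hCS hTT' hno hd hdT hc⟩
  · rw [Set.union_comm] at hCS
    exact .inr fun c hc =>
      ⟨(hCS hc).1, h.forall_subset_of_anticomplete hC hCS hTT'.symm hno hd hdT' hc⟩

end Anticomplete

theorem mem_attachedTo_or_of_complete (hTT' : H.IsCompleteBetween T T') {v : β}
    (hv : v ∈ attachedTo N (T ∪ T')) : v ∈ attachedTo N T ∨ v ∈ attachedTo N T' := by
  by_contra! hvT
  obtain ⟨p, hp, hpT⟩ := Set.not_subset.1 fun hsub => hvT.1 ⟨hv.1, hsub⟩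
  obtain ⟨q, hq, hqT'⟩ := Set.not_subset.1 fun hsub => hvT.2 ⟨hv.1, hsub⟩
  have hqp : H.Adj q p :=
    hTT' ((hv.2 hq).resolve_right hqT') ((hv.2 hp).resolve_left hpT)
  exact h.isIndepSet v hq hp hqp.ne hqp

theorem not_adj_of_complete (hTT' : H.IsCompleteBetween T T') (hC : G.IsClique C)
    (hCT : ↑C ⊆ attachedTo N T) (hno : ¬ ∃ p, ∀ c ∈ C, p ∈ N c) {w : β}
    (hwT' : w ∈ attachedTo N T') (hw : ∃ c ∈ C, ¬ G.Adj c w) {v : β} (hv : v ∈ C) :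
    ¬ G.Adj v w := by
  intro hvw
  obtain ⟨d, hd, hdw⟩ := hw
  refine hno (h.exists_common_of_subset hC (fun c hc => (hCT hc).1) (¬ G.Adj · w) hd hdw hv
    (not_not.2 hvw) fun c hc hcw u hu huw p hp => ?_)
  by_contra hpu
  have hcu : c ≠ u := fun hcu => hpu (hcu ▸ hp)
  have hout {x : β} (hx : x ∈ C) : Disjoint (N x) (N w) :=
    hTT'.disjoint.mono (hCT hx).2 hwT'.2
  have hpw : p ∉ N w := (hout hc).notMem_of_mem_left hp
  have hcw' : c ≠ w := fun hcw' => hpw (hcw' ▸ hp)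
  obtain ⟨q, hq⟩ := hwT'.1
  have hqcu : q ∉ N c ∪ N u :=
    not_or.2 ⟨(hout hc).notMem_of_mem_right hq, (hout hu).notMem_of_mem_right hq⟩
  have hpq : Hᶜ.Adj p q := h.path (hC hc hu hcu) (not_not.1 huw) hcw' hcw (hCT hu).1
    ⟨hp, not_or.2 ⟨hpu, hpw⟩⟩ ⟨hq, hqcu⟩
  exact hpq.2 (hTT' ((hCT hc).2 hp) (hwT'.2 hq))

variable (hno : ∀ C : Finset β, G.IsNClique W C → ¬ ∃ p, ∀ c ∈ C, p ∈ N c)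
include hno

theorem splitsCliques_of_anticomplete (hTT' : Hᶜ.IsCompleteBetween T T')
    (hX : SplitsCliques G N W T X) (hY : SplitsCliques G N W T' Y) :
    SplitsCliques G N W (T ∪ T') ((attachedTo N T).ite X Y) := by
  intro C hC hCS
  rcases h.subset_attachedTo_or_of_anticomplete hC.isClique hCS hTT' (hno C hC) with hCT | hCT'
  · refine (hX C hC hCT).congr fun c hc => ?_
    simp [Set.ite, hCT hc]
  · refine (hY C hC hCT').congr fun c hc => ?_
    have hcT := (disjoint_attachedTo hTT'.disjoint).notMem_of_mem_right (hCT' hc)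
    simp [Set.ite, hcT]

theorem splitsCliques_of_complete (hG : G.CliqueFree (W + 1)) (hTT' : H.IsCompleteBetween T T')
    (hX : SplitsCliques G N W T X) (hY : SplitsCliques G N W T' Y) :
    SplitsCliques G N W (T ∪ T') ((attachedTo N T).ite
      (X ∪ {v | ∃ w ∈ attachedTo N T', G.Adj v w})
      (Y \ {v | ∃ w ∈ attachedTo N T, G.Adj v w})) := by
  intro C hC hCS
  have hdisj : Disjoint (attachedTo N T) (attachedTo N T') := disjoint_attachedTo hTT'.disjoint
  have hside {c : β} (hc : c ∈ C) := h.mem_attachedTo_or_of_complete hTT' (hCS hc)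
  by_cases hCT : ↑C ⊆ attachedTo N T
  · refine (hX C hC hCT).congr fun c hc => ?_
    have hcw (w : β) (hw : w ∈ attachedTo N T') : ¬ G.Adj c w :=
      h.not_adj_of_complete hTT' hC.isClique hCT (hno C hC) hw
        (exists_not_adj_of_cliqueFree hG hC w) hc
    have hc' : ¬ ∃ w ∈ attachedTo N T', G.Adj c w := fun ⟨w, hw, hcw'⟩ => hcw w hw hcw'
    simp [Set.ite, hCT hc, hc']
  by_cases hCT' : ↑C ⊆ attachedTo N T'
  · refine (hY C hC hCT').congr fun c hc => ?_
    have hcw (w : β) (hw : w ∈ attachedTo N T) : ¬ G.Adj c w :=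
      h.not_adj_of_complete hTT'.symm hC.isClique hCT' (hno C hC) hw
        (exists_not_adj_of_cliqueFree hG hC w) hc
    have hc' : ¬ ∃ w ∈ attachedTo N T, G.Adj c w := fun ⟨w, hw, hcw'⟩ => hcw w hw hcw'
    simp [Set.ite, hdisj.notMem_of_mem_right (hCT' hc), hc']
  obtain ⟨y, hy, hyT⟩ := Set.not_subset.1 hCT
  obtain ⟨x, hx, hxT'⟩ := Set.not_subset.1 hCT'
  have hxT : x ∈ attachedTo N T := (hside hx).resolve_right hxT'
  have hyT' : y ∈ attachedTo N T' := (hside hy).resolve_left hyT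
  have hxy : G.Adj x y := hC.isClique hx hy fun hxy => hyT (hxy ▸ hxT)
  have hy' : ∃ w ∈ attachedTo N T, G.Adj y w := ⟨x, hxT, hxy.symm⟩
  exact ⟨⟨x, hx, .inl ⟨.inr ⟨y, hyT', hxy⟩, hxT⟩⟩, y, hy, by simp [Set.ite, hyT, hy']⟩

theorem exists_splitsCliques_of_finite (hH : IsCograph H) (hW : 0 < W)
    (hG : G.CliqueFree (W + 1)) (hS : S.Finite) : ∃ X, SplitsCliques G N W S X := by
  refine hH.finite_induction (motive := fun S => ∃ X, SplitsCliques G N W S X)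
    (fun S hS => ?_) ?_ ?_ hS
  · refine ⟨∅, fun C hC hCS => absurd ?_ (hno C hC)⟩
    obtain ⟨d, hd⟩ := Finset.card_pos.1 (hC.card_eq.symm ▸ hW)
    obtain ⟨p, hp⟩ := (hCS hd).1
    refine ⟨p, fun c hc => ?_⟩
    obtain ⟨q, hq⟩ := (hCS hc).1
    exact hS ((hCS hc).2 hq) ((hCS hd).2 hp) ▸ hq
  · rintro T T' hTT' ⟨X, hX⟩ ⟨Y, hY⟩
    exact ⟨_, h.splitsCliques_of_complete hno hG hTT' hX hY⟩
  · rintro T T' hTT' ⟨X, hX⟩ ⟨Y, hY⟩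
    exact ⟨_, h.splitsCliques_of_anticomplete hno hTT' hX hY⟩

theorem exists_splits_of_subset (hH : IsCograph H) (hW : 0 < W) (hG : G.CliqueFree (W + 1))
    (F : Finset β) : ∃ X : Set β, ∀ C ⊆ F, G.IsNClique W C → (∀ c ∈ C, (N c).Nonempty) →
      Splits X C := by
  obtain ⟨A, hA, hFA⟩ : ∃ A : Set α, A.Finite ∧ ∀ v ∈ F, (N v).Nonempty → (N v ∩ A).Nonempty :=
    ⟨⋃ v ∈ F, {p | ∃ hv : (N v).Nonempty, p = hv.some},
      F.finite_toSet.biUnion fun v _ =>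
        Set.Subsingleton.finite (by rintro _ ⟨_, rfl⟩ _ ⟨_, rfl⟩; rfl),
      fun v hv hne => ⟨hne.some, hne.some_mem, Set.mem_biUnion hv ⟨hne, rfl⟩⟩⟩
  obtain ⟨X, hX⟩ := (h.inter A).exists_splitsCliques_of_finite
    (fun C hC ⟨p, hp⟩ => hno C hC ⟨p, fun c hc => (hp c hc).1⟩) hH hW hG hA
  exact ⟨X, fun C hCF hC hne =>
    hX C hC fun c hc => ⟨hFA c (hCF hc) (hne c hc), Set.inter_subset_right⟩⟩

theorem exists_splits (hH : IsCograph H) (hW : 0 < W) (hG : G.CliqueFree (W + 1)) :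
    ∃ X : Set β, ∀ C, G.IsNClique W C → (∀ c ∈ C, (N c).Nonempty) → Splits X C := by
  choose X hX using h.exists_splits_of_subset hno hH hW hG
  obtain ⟨Y, hY⟩ := Finset.rado_selection fun F v => v ∈ X F
  refine ⟨{v | Y v}, fun C hC hne => ?_⟩
  obtain ⟨F, hCF, hYF⟩ := hY C
  exact (hX F C hCF hC hne).congr fun c hc => Iff.of_eq (hYF c hc).symm

end IsParitySystem

end ParitySystem

section InducedPath

variable {G H : SimpleGraph V} {A : Set V} {a b c d e u v w : V}

theorem isInducedPath_nil : IsInducedPath G (.nil : G.Walk u u) :=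
  ⟨.nil, by simp [IsInducedWalk]⟩

theorem IsInducedPath.cons {p : G.Walk v w} (hp : IsInducedPath G p) (huv : G.Adj u v)
    (hu : u ∉ p.support) (huniq : ∀ x ∈ p.support, G.Adj u x → x = v) :
    IsInducedPath G (.cons huv p) := by
  refine ⟨hp.1.cons hu, fun x hx y hy hxy => ?_⟩
  rw [Walk.support_cons, List.mem_cons] at hx hy
  rw [Walk.toSubgraph, Subgraph.sup_adj]
  rcases hx with rfl | hx <;> rcases hy with rfl | hy
  · exact absurd hxy G.irrefl
  · obtain rfl := huniq y hy hxy
    exact .inl rfl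
  · obtain rfl := huniq x hx hxy.symm
    exact .inl (Sym2.eq_swap)
  · exact .inr (hp.2 x hx y hy hxy)

/-- `H` records the parity of the `A`-paths of `G` of length at most `n`. -/
def RecordsParity (G H : SimpleGraph V) (A : Set V) (n : ℕ) : Prop :=
  ∀ u v : V, u ∈ A → v ∈ A → u ≠ v → ∀ p : G.Walk u v,
    IsInducedPath G p → InteriorIn G p Aᶜ → p.length ≤ n → (H.Adj u v ↔ Odd p.length)

namespace RecordsParity

variable {n : ℕ} (h : RecordsParity G H A n) (hA : G.IsIndepSet A)
include h hA

theorem not_adj_of_adj_adj (hn : 2 ≤ n) (ha : a ∈ A) (hc : c ∈ A) (hab : G.Adj a b)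
    (hbc : G.Adj b c) : ¬ H.Adj a c := by
  intro hH
  have hac : ¬ G.Adj a c := hA ha hc hH.ne
  have hb : b ∉ A := fun hb => hA ha hb hab.ne hab
  have hpath : IsInducedPath G (.cons hab (.cons hbc .nil)) :=
    (isInducedPath_nil.cons hbc (by simp [hbc.ne]) (by simp)).cons hab
      (by simp [hab.ne, hH.ne]) (by simp [hac])
  have hodd := (h a c ha hc hH.ne _ hpath (by simp [InteriorIn, hb]) hn).1 hH
  simp [Nat.odd_iff] at hodd

theorem adj_of_adj_adj_adj (hn : 3 ≤ n) (ha : a ∈ A) (hd : d ∈ A) (hab : G.Adj a b)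
    (hbc : G.Adj b c) (hcd : G.Adj c d) (hac : ¬ G.Adj a c) (hbd : ¬ G.Adj b d) : H.Adj a d := by
  have hne : a ≠ d := by rintro rfl; exact hac hcd.symm
  have had : ¬ G.Adj a d := hA ha hd hne
  have hb : b ∉ A := fun hb => hA ha hb hab.ne hab
  have hc : c ∉ A := fun hc => hA hc hd hcd.ne hcd
  have hpath : IsInducedPath G (.cons hab (.cons hbc (.cons hcd .nil))) := by
    refine ((isInducedPath_nil.cons hcd ?_ ?_).cons hbc ?_ ?_).cons hab ?_ ?_ <;>
      grind [Walk.support_cons, Walk.support_nil, SimpleGraph.irrefl]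
  have hinterior : InteriorIn G (.cons hab (.cons hbc (.cons hcd .nil))) Aᶜ := by
    grind [InteriorIn, Walk.support_cons, Walk.support_nil]
  exact (h a d ha hd hne _ hpath hinterior hn).2 (by simp [Nat.odd_iff])

theorem not_adj_of_adj_adj_adj_adj (hn : 4 ≤ n) (ha : a ∈ A) (he : e ∈ A) (hc : c ∉ A)
    (hab : G.Adj a b) (hbc : G.Adj b c) (hcd : G.Adj c d) (hde : G.Adj d e) (hbd : b ≠ d)
    (hac' : ¬ G.Adj a c) (had' : ¬ G.Adj a d) (hbd' : ¬ G.Adj b d) (hbe' : ¬ G.Adj b e)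
    (hce' : ¬ G.Adj c e) : ¬ H.Adj a e := by
  intro hH
  have hae : ¬ G.Adj a e := hA ha he hH.ne
  have hb : b ∉ A := fun hb => hA ha hb hab.ne hab
  have hd : d ∉ A := fun hd => hA hd he hde.ne hde
  have hpath : IsInducedPath G (.cons hab (.cons hbc (.cons hcd (.cons hde .nil)))) := by
    refine (((isInducedPath_nil.cons hde ?_ ?_).cons hcd ?_ ?_).cons hbc ?_ ?_).cons hab ?_ ?_ <;>
      grind [Walk.support_cons, Walk.support_nil, SimpleGraph.irrefl]
  have hinterior : InteriorIn G (.cons hab (.cons hbc (.cons hcd (.cons hde .nil)))) Aᶜ := by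
    grind [InteriorIn, Walk.support_cons, Walk.support_nil]
  have hodd := (h a e ha he hH.ne _ hpath hinterior hn).1 hH
  simp [Nat.odd_iff] at hodd

theorem isParitySystem (hn : 4 ≤ n) : IsParitySystem G H fun v => G.neighborSet v ∩ A where
  isIndepSet v := fun p ⟨hvp, hp⟩ q ⟨hvq, hq⟩ _ =>
    h.not_adj_of_adj_adj hA (by lia) hp hq hvp.symm hvq
  edge u v huv := by
    rintro p ⟨⟨hup, hp⟩, hvp⟩ q ⟨⟨hvq, hq⟩, huq⟩
    exact h.adj_of_adj_adj_adj hA (by lia) hp hq hup.symm huv hvq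
      (fun hpv => hvp ⟨hpv.symm, hp⟩) fun huq' => huq ⟨huq', hq⟩
  path u v w huv hvw huw huw' := by
    rintro ⟨x, hvx, hx⟩ p ⟨⟨hup, hp⟩, hpvw⟩ q ⟨⟨hwq, hq⟩, hquv⟩
    have hv : v ∉ A := fun hv => hA hv hx hvx.ne hvx
    have hpv : ¬ G.Adj p v := fun hpv => hpvw (.inl ⟨hpv.symm, hp⟩)
    have hpw : ¬ G.Adj p w := fun hpw => hpvw (.inr ⟨hpw.symm, hp⟩)
    have huq : ¬ G.Adj u q := fun huq => hquv (.inl ⟨huq, hq⟩)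
    have hvq : ¬ G.Adj v q := fun hvq => hquv (.inr ⟨hvq, hq⟩)
    exact ⟨fun hpq => huq (hpq ▸ hup),
      h.not_adj_of_adj_adj_adj_adj hA hn hp hq hv hup.symm huv hvw hwq huw hpv hpw huw' huq hvq⟩

end RecordsParity

end InducedPath

theorem stmt3_general (G : SimpleGraph V) {W : ℕ} (hW : 0 < W) (hG : G.CliqueFree (W + 1))
    {A B : Set V} (hstable : G.IsIndepSet A) (hnbr : ∀ b ∈ B, ∃ a ∈ A, G.Adj b a)
    {H : SimpleGraph V} (hco : IsCograph H) (hpar : RecordsParity G H A 4) :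
    ∃ X Y : Set V, X ∪ Y = B ∧ Disjoint X Y ∧
      ∀ C : Finset V, ↑C ⊆ B → G.IsNClique W C →
        (∃ x ∈ C, x ∈ X) ∧ (∃ y ∈ C, y ∈ Y) := by
  have hno (C : Finset V) (hC : G.IsNClique W C) : ¬ ∃ p, ∀ c ∈ C, p ∈ G.neighborSet c ∩ A := by
    rintro ⟨p, hp⟩
    obtain ⟨c, hc, hcp⟩ := exists_not_adj_of_cliqueFree hG hC p
    exact hcp (hp c hc).1
  obtain ⟨X, hX⟩ := (hpar.isParitySystem hstable le_rfl).exists_splits hno hco hW hG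
  refine ⟨B ∩ X, B \ X, Set.inter_union_sdiff B X, Set.disjoint_sdiff_inter.symm, ?_⟩
  intro C hCB hC
  obtain ⟨⟨x, hx, hxX⟩, y, hy, hyX⟩ := hX C hC fun c hc =>
    (hnbr c (hCB hc)).imp fun _ ha => ha.symm
  exact ⟨⟨x, hx, hCB hx, hxX⟩, y, hy, hCB hy, hyX⟩

theorem stmt3 [Fintype V] (G : SimpleGraph V) (W : ℕ) (hW : 0 < W)
    (hω : G.cliqueNum ≤ W) (A B : Set V)
    (hpart : A ∪ B = Set.univ) (hAB : Disjoint A B)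
    (hstable : ∀ x ∈ A, ∀ y ∈ A, ¬ G.Adj x y)
    (hnbr : ∀ b ∈ B, ∃ a ∈ A, G.Adj b a)
    (H : SimpleGraph V) (hco : IsCograph H)
    (hHA : ∀ x y, H.Adj x y → x ∈ A ∧ y ∈ A)
    (hpar : ∀ u v : V, u ∈ A → v ∈ A → u ≠ v → ∀ p : G.Walk u v,
       IsInducedPath G p → InteriorIn G p Aᶜ → (H.Adj u v ↔ Odd p.length)) :
    ∃ X Y : Set V, X ∪ Y = B ∧ Disjoint X Y ∧
      ∀ C : Finset V, ↑C ⊆ B → G.IsNClique W C →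
        (∃ x ∈ C, x ∈ X) ∧ (∃ y ∈ C, y ∈ Y) :=
  stmt3_general G hW (fun _ hC => (hC.card_eq ▸ hC.isClique.card_le_cliqueNum).not_gt (by lia))
    (fun x hx y hy _ => hstable x hx y hy) hnbr hco
    fun u v hu hv huv p hp hinterior _ => hpar u v hu hv huv p hp hinterior
end

section
/- Let (L0, L1, …, Lk) be a levelling in a graph G such that: Lk is stable; for every two vertices u, v ∈ Lk, all induced paths in G between u and v with interior in L0 ∪ ⋯ ∪ L(k−1) have the same parity; and for 1 ≤ i ≤ k−1, any two adjacent vertices of Li have the same set of parents. Let H be the graph on vertex set Lk in which distinct u, v are adjacent iff there is an induced path of odd length between them with interior in L0 ∪ ⋯ ∪ L(k−1). Then H is a cograph. -/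
open SimpleGraph

universe u

variable {V : Type u}

/-! A graph `F` is *realized* on level `k` by stable vertices `f i ∈ L k` if `f i`, `f j` are joined
by an odd induced path through the lower levels exactly when `i`, `j` are adjacent in `F`, the
parity of such paths being well defined. By induction on `k`, the path on four vertices is never
realized.

On level `k + 1`, the path through a common parent of `f i` and `f j` is even, so `i` and `j` are
not adjacent. For the path on four vertices, comparing parities shows that a common parent of two
nonadjacent vertices would force one of two adjacent vertices; hence each `f i` has a parent `g i`
of its own. Induced paths between `g i` and `g j` extend by two edges, so `g` realizes the same
graph on level `k`, provided that the `g i` are pairwise nonadjacent. Adjacent `g i`, `g j` have the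
same neighbours below, so a single edge among the `g i` forces all of `g 0`, `g 1`, `g 2`, `g 3` to
form an induced path; then `f 0`, `g 0`, …, `g 3`, `f 3` is an odd induced path, although `0` and
`3` are not adjacent. -/

variable {G : SimpleGraph V} {L : ℕ → Set V} {k : ℕ}

theorem isCograph_iff_not_isIndContained_pathGraph {H : SimpleGraph V} :
    IsCograph H ↔ ¬ pathGraph 4 ⊴ H := by
  refine not_congr ⟨?_, ?_⟩
  · rintro ⟨a, b, c, d, nac, nad, nbd, hab, hbc, hcd, hac, had, hbd⟩
    have hinj : Function.Injective ![a, b, c, d] := fun i j hij => by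
      fin_cases i <;> fin_cases j <;> simp_all
    have hadj (i j : Fin 4) :
        H.Adj (![a, b, c, d] i) (![a, b, c, d] j) ↔ (pathGraph 4).Adj i j := by
      fin_cases i <;> fin_cases j <;> simp_all [pathGraph_adj, H.adj_comm]
    exact ⟨⟨⟨_, hinj⟩, fun {i j} => hadj i j⟩⟩
  · rintro ⟨φ⟩
    refine ⟨φ 0, φ 1, φ 2, φ 3, ?_⟩
    simp [φ.map_adj_iff, pathGraph_adj]

section InducedPath

variable {u v w x y : V}

theorem IsInducedPath.nil (u : V) : IsInducedPath G (Walk.nil : G.Walk u u) :=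
  ⟨.nil, by simp [IsInducedWalk]⟩

theorem isInducedPath_cons (h : G.Adj u v) (p : G.Walk v w) :
    IsInducedPath G (.cons h p) ↔
      IsInducedPath G p ∧ u ∉ p.support ∧ ∀ t ∈ p.support, G.Adj u t → t = v := by
  have hedge : ∀ {s t}, s(s, t) ∈ p.edges → s ∈ p.support ∧ t ∈ p.support := fun hst =>
    ⟨p.fst_mem_support_of_mem_edges hst, p.snd_mem_support_of_mem_edges hst⟩
  simp only [IsInducedPath, IsInducedWalk, Walk.cons_isPath_iff, Walk.adj_toSubgraph_iff_mem_edges,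
    Walk.edges_cons, Walk.support_cons, List.mem_cons, Sym2.eq_iff]
  constructor
  · rintro ⟨⟨hp, hu⟩, hind⟩
    exact ⟨⟨hp, by grind⟩, hu, by grind⟩
  · rintro ⟨⟨hp, hind⟩, hu, hadj⟩
    exact ⟨⟨hp, hu⟩, by grind [G.adj_comm, G.irrefl]⟩

theorem IsInducedPath.reverse {p : G.Walk u v} (hp : IsInducedPath G p) :
    IsInducedPath G p.reverse := by
  refine ⟨hp.1.reverse, ?_⟩
  simpa only [IsInducedWalk, Walk.toSubgraph_reverse, Walk.support_reverse, List.mem_reverse]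
    using hp.2

theorem IsInducedPath.cons_concat {p : G.Walk x y} (hp : IsInducedPath G p) (hux : G.Adj u x)
    (hyv : G.Adj y v) (hne : u ≠ v) (huv : ¬ G.Adj u v) (hu : u ∉ p.support) (hv : v ∉ p.support)
    (hux' : ∀ t ∈ p.support, G.Adj u t → t = x) (hyv' : ∀ t ∈ p.support, G.Adj t v → t = y) :
    IsInducedPath G (.cons hux (p.concat hyv)) := by
  have hconcat : IsInducedPath G (p.concat hyv) := by
    rw [← (p.concat hyv).reverse_reverse, Walk.reverse_concat]
    refine ((isInducedPath_cons _ _).2 ⟨hp.reverse, ?_, ?_⟩).reverse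
    · simpa using hv
    · simpa [G.adj_comm v] using hyv'
  refine (isInducedPath_cons _ _).2 ⟨hconcat, ?_, ?_⟩
  · simp [Walk.support_concat, hu, hne]
  · simp only [Walk.support_concat, List.mem_append, List.mem_singleton]
    rintro t (ht | rfl) hut
    · exact hux' t ht hut
    · exact absurd hut huv

theorem IsInducedPath.exists_support_subset_cons {q : G.Walk w v} (hq : IsInducedPath G q)
    (hu : ∃ t ∈ q.support, u = t ∨ G.Adj u t) :
    ∃ p : G.Walk u v, IsInducedPath G p ∧ p.support ⊆ u :: q.support := by
  induction q with
  | nil =>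
    simp only [Walk.support_nil, List.mem_singleton, exists_eq_left] at hu
    obtain rfl | hadj := hu
    · exact ⟨.nil, .nil _, by simp⟩
    · exact ⟨.cons hadj .nil, (isInducedPath_cons _ _).2 ⟨hq, by simp [hadj.ne], by simp⟩, by simp⟩
  | @cons w x v h q ih =>
    by_cases htail : ∃ t ∈ q.support, u = t ∨ G.Adj u t
    · obtain ⟨p, hp, hsub⟩ := ih ((isInducedPath_cons _ _).1 hq).1 htail
      exact ⟨p, hp, by grind [Walk.support_cons]⟩
    · push Not at htail
      simp only [Walk.support_cons, List.mem_cons, exists_eq_or_imp] at hu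
      obtain rfl | hadj := hu.resolve_right (by grind)
      · exact ⟨_, hq, by simp⟩
      · refine ⟨.cons hadj (.cons h q), (isInducedPath_cons _ _).2 ⟨hq, ?_, ?_⟩, by simp⟩
        · grind [Walk.support_cons, hadj.ne]
        · grind [Walk.support_cons]

theorem exists_isInducedPath_support_subset (p : G.Walk u v) :
    ∃ q : G.Walk u v, IsInducedPath G q ∧ q.support ⊆ p.support := by
  induction p with
  | nil => exact ⟨.nil, .nil _, by simp⟩
  | @cons u w v h p ih =>
    obtain ⟨q, hq, hqp⟩ := ih
    obtain ⟨r, hr, hrq⟩ := hq.exists_support_subset_cons ⟨w, q.start_mem_support, Or.inr h⟩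
    exact ⟨r, hr, by grind [Walk.support_cons]⟩

end InducedPath

theorem mem_lowerLevels {x : V} : x ∈ lowerLevels L k ↔ ∃ i < k, x ∈ L i := by
  simp [lowerLevels]

theorem mem_lowerLevels_succ {x : V} :
    x ∈ lowerLevels L (k + 1) ↔ x ∈ lowerLevels L k ∨ x ∈ L k := by
  simp only [mem_lowerLevels, Nat.lt_succ_iff_lt_or_eq, or_and_right, exists_or, exists_eq_left]

section LowerPath

variable {u v x y z : V}

/-- An induced path whose interior lies in `L 0 ∪ ⋯ ∪ L (k - 1)`. -/
def IsLowerPath (G : SimpleGraph V) (L : ℕ → Set V) (k : ℕ) {u v : V} (p : G.Walk u v) : Prop :=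
  IsInducedPath G p ∧ InteriorIn G p (lowerLevels L k)

/-- All lower paths between `u` and `v` have the same parity. -/
def HasLowerParity (G : SimpleGraph V) (L : ℕ → Set V) (k : ℕ) (u v : V) : Prop :=
  ∀ p q : G.Walk u v, IsLowerPath G L k p → IsLowerPath G L k q → (Odd p.length ↔ Odd q.length)

theorem hasLowerParity_self (u : V) : HasLowerParity G L k u u := by
  intro p q hp hq
  rw [(Walk.isPath_iff_nil.1 hp.1.1).length_eq_zero, (Walk.isPath_iff_nil.1 hq.1.1).length_eq_zero]

theorem oddConn_iff_exists_isLowerPath :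
    OddConn G L k u v ↔ ∃ p : G.Walk u v, IsLowerPath G L k p ∧ Odd p.length := by
  constructor
  · rintro ⟨-, p, hp, hodd, hint⟩
    exact ⟨p, ⟨hp, hint⟩, hodd⟩
  · rintro ⟨p, ⟨hp, hint⟩, hodd⟩
    refine ⟨?_, p, hp, hodd, hint⟩
    rintro rfl
    simp [(Walk.isPath_iff_nil.1 hp.1).length_eq_zero] at hodd

theorem HasLowerParity.oddConn_iff (h : HasLowerParity G L k u v) {p : G.Walk u v}
    (hp : IsLowerPath G L k p) : OddConn G L k u v ↔ Odd p.length := by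
  rw [oddConn_iff_exists_isLowerPath]
  exact ⟨fun ⟨q, hq, hodd⟩ => (h q p hq hp).1 hodd, fun hodd => ⟨p, hp, hodd⟩⟩

theorem oddConn_of_adj (h : G.Adj u v) : OddConn G L k u v := by
  refine oddConn_iff_exists_isLowerPath.2 ⟨h.toWalk, ⟨⟨.of_adj h, ?_⟩, ?_⟩, by simp⟩
  · simp [IsInducedWalk]
  · simp +contextual [InteriorIn]

theorem IsInducedPath.exists_isLowerPath_of_ends {p : G.Walk x y} (hp : IsInducedPath G p)
    (hlow : ∀ t ∈ p.support, t ∈ lowerLevels L k) (hu : u ∉ lowerLevels L k)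
    (hv : v ∉ lowerLevels L k) (hne : u ≠ v) (huv : ¬ G.Adj u v)
    (hux : ∀ t ∈ p.support, G.Adj u t ↔ t = x) (hyv : ∀ t ∈ p.support, G.Adj t v ↔ t = y) :
    ∃ q : G.Walk u v, IsLowerPath G L k q ∧ q.length = p.length + 2 := by
  refine ⟨.cons ((hux x p.start_mem_support).2 rfl)
    (p.concat ((hyv y p.end_mem_support).2 rfl)), ⟨?_, ?_⟩, by simp⟩
  · exact hp.cons_concat _ _ hne huv (fun h => hu (hlow u h)) (fun h => hv (hlow v h))
      (fun t ht => (hux t ht).1) (fun t ht => (hyv t ht).1)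
  · simp only [InteriorIn, Walk.support_cons, Walk.support_concat]
    grind

theorem IsLowerPath.exists_replace_start {p : G.Walk y x} (hp : IsLowerPath G L k p)
    (htwin : ∀ t ∈ lowerLevels L k, G.Adj y t ↔ G.Adj z t) (hz : z ∉ lowerLevels L k)
    (hyx : y ≠ x) (hzx : z ≠ x) (hyx' : ¬ G.Adj y x) (hzx' : ¬ G.Adj z x) :
    ∃ q : G.Walk z x, IsLowerPath G L k q ∧ q.length = p.length := by
  cases p with
  | nil => exact absurd rfl hyx
  | @cons _ w _ hyw p =>
    obtain ⟨hpath, hint⟩ := hp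
    obtain ⟨hp, hyp, hyw'⟩ := (isInducedPath_cons _ _).1 hpath
    have hlow : ∀ t ∈ p.support, t ≠ x → t ∈ lowerLevels L k := fun t ht htx =>
      hint t (by simp [ht]) (fun hty => hyp (hty ▸ ht)) htx
    have hwx : w ≠ x := fun h => hyx' (h ▸ hyw)
    have hzw : G.Adj z w := (htwin w (hlow w p.start_mem_support hwx)).1 hyw
    refine ⟨.cons hzw p, ⟨(isInducedPath_cons _ _).2 ⟨hp, ?_, ?_⟩, ?_⟩, rfl⟩
    · exact fun hzp => hz (hlow z hzp hzx)
    · intro t ht hzt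
      have htx : t ≠ x := fun h => hzx' (h ▸ hzt)
      exact hyw' t ht ((htwin t (hlow t ht htx)).2 hzt)
    · intro t ht htz htx
      exact hlow t ((List.mem_cons.1 ht).resolve_left htz) htx

end LowerPath

/-- `x` is a parent of `u`, where `x ∈ L k` and `u` is a vertex of the next level. -/
def IsParent (G : SimpleGraph V) (L : ℕ → Set V) (k : ℕ) (x u : V) : Prop :=
  x ∈ L k ∧ G.Adj x u

/-- For `1 ≤ i < k`, adjacent vertices of `L i` have the same parents. The level is written
`i + 1`, so that its parents are in `L i`. -/
def AdjacentSameParents (G : SimpleGraph V) (L : ℕ → Set V) (k : ℕ) : Prop :=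
  ∀ i, i + 1 < k → ∀ u ∈ L (i + 1), ∀ v ∈ L (i + 1), G.Adj u v →
    ∀ w, IsParent G L i w u ↔ IsParent G L i w v

theorem IsParent.mem_lowerLevels {x u : V} (h : IsParent G L k x u) : x ∈ lowerLevels L (k + 1) :=
  mem_lowerLevels_succ.2 (Or.inr h.1)

theorem AdjacentSameParents.mono {j : ℕ} (h : AdjacentSameParents G L k) (hj : j ≤ k) :
    AdjacentSameParents G L j :=
  fun i hi => h i (hi.trans_le hj)

namespace IsLevelling

variable {u v x y : V}

theorem mono {j : ℕ} (h : IsLevelling G k L) (hj : j ≤ k) : IsLevelling G j L :=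
  ⟨fun i i' hi hi' => h.1 i i' (hi.trans hj) (hi'.trans hj), h.2.1,
    fun i hi hi' => h.2.2 i hi (hi'.trans hj)⟩

theorem notMem_lowerLevels (h : IsLevelling G k L) (hx : x ∈ L k) : x ∉ lowerLevels L k := by
  rw [mem_lowerLevels]
  rintro ⟨i, hi, hxi⟩
  exact Set.disjoint_left.1 (h.1 i k hi.le le_rfl hi.ne) hxi hx

theorem not_adj_of_mem_lowerLevels (h : IsLevelling G (k + 1) L) (hx : x ∈ lowerLevels L k)
    (hu : u ∈ L (k + 1)) : ¬ G.Adj x u := by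
  obtain ⟨i, hi, hxi⟩ := mem_lowerLevels.1 hx
  exact (h.2.2 (k + 1) k.succ_pos le_rfl u hu).2 i (by lia) x hxi

theorem exists_isParent (h : IsLevelling G (k + 1) L) (hu : u ∈ L (k + 1)) :
    ∃ x, IsParent G L k x u :=
  (h.2.2 (k + 1) k.succ_pos le_rfl u hu).1

theorem exists_walk_to_root (h : IsLevelling G k L) {r : V} (hr : L 0 = {r}) (hx : x ∈ L k) :
    ∃ p : G.Walk x r, ∀ t ∈ p.support, t = x ∨ t ∈ lowerLevels L k := by
  induction k generalizing x with
  | zero =>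
    obtain rfl : x = r := by simpa [hr] using hx
    exact ⟨.nil, by simp⟩
  | succ k ih =>
    obtain ⟨y, hy, hyx⟩ := h.exists_isParent hx
    obtain ⟨p, hp⟩ := ih (h.mono k.le_succ) hy
    refine ⟨.cons hyx.symm p, ?_⟩
    simp only [Walk.support_cons, mem_lowerLevels_succ]
    grind

theorem exists_isLowerPath (h : IsLevelling G k L) (hx : x ∈ L k) (hy : y ∈ L k) :
    ∃ p : G.Walk x y, IsLowerPath G L k p := by
  obtain ⟨r, hr⟩ := h.2.1
  obtain ⟨p, hp⟩ := h.exists_walk_to_root hr hx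
  obtain ⟨q, hq⟩ := h.exists_walk_to_root hr hy
  obtain ⟨w, hw, hsub⟩ := exists_isInducedPath_support_subset (p.append q.reverse)
  refine ⟨w, hw, fun t ht htx hty => ?_⟩
  obtain htp | htq : t ∈ p.support ∨ t ∈ q.support := by
    simpa [Walk.mem_support_append_iff] using hsub ht
  · exact (hp t htp).resolve_left htx
  · exact (hq t htq).resolve_left hty

theorem exists_isLowerPath_length_two (h : IsLevelling G (k + 1) L) (hu : u ∈ L (k + 1))
    (hv : v ∈ L (k + 1)) (hne : u ≠ v) (huv : ¬ G.Adj u v) (hxu : IsParent G L k x u)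
    (hxv : IsParent G L k x v) : ∃ q : G.Walk u v, IsLowerPath G L (k + 1) q ∧ q.length = 2 :=
  (IsInducedPath.nil x).exists_isLowerPath_of_ends (by simpa using hxu.mem_lowerLevels)
    (h.notMem_lowerLevels hu) (h.notMem_lowerLevels hv) hne huv (by simp [hxu.2.symm])
    (by simp [hxv.2])

theorem exists_isLowerPath_length_add_two (h : IsLevelling G (k + 1) L) (hu : u ∈ L (k + 1))
    (hv : v ∈ L (k + 1)) (huv : ¬ G.Adj u v) (hxu : IsParent G L k x u) (hyv : IsParent G L k y v)
    (hxv : ¬ G.Adj x v) (hyu : ¬ G.Adj y u) {p : G.Walk x y} (hp : IsLowerPath G L k p) :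
    ∃ q : G.Walk u v, IsLowerPath G L (k + 1) q ∧ q.length = p.length + 2 := by
  have hlow : ∀ t ∈ p.support, t = x ∨ t = y ∨ t ∈ lowerLevels L k := fun t ht => by
    have := hp.2 t ht
    tauto
  refine hp.1.exists_isLowerPath_of_ends ?_ (h.notMem_lowerLevels hu) (h.notMem_lowerLevels hv)
    (fun e => hxv (e ▸ hxu.2)) huv ?_ ?_
  · intro t ht
    obtain rfl | rfl | ht := hlow t ht
    · exact hxu.mem_lowerLevels
    · exact hyv.mem_lowerLevels
    · exact mem_lowerLevels_succ.2 (Or.inl ht)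
  · refine fun t ht => ⟨fun hut => ?_, fun e => e ▸ hxu.2.symm⟩
    obtain rfl | rfl | ht := hlow t ht
    · rfl
    · exact absurd hut.symm hyu
    · exact absurd hut.symm (h.not_adj_of_mem_lowerLevels ht hu)
  · refine fun t ht => ⟨fun htv => ?_, fun e => e ▸ hyv.2⟩
    obtain rfl | rfl | ht := hlow t ht
    · exact absurd htv hxv
    · rfl
    · exact absurd htv (h.not_adj_of_mem_lowerLevels ht hv)

theorem adj_iff_adj_of_mem_lowerLevels (h : IsLevelling G k L)
    (hpar : AdjacentSameParents G L (k + 1)) (hx : x ∈ L k) (hy : y ∈ L k) (hxy : G.Adj x y)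
    {t : V} (ht : t ∈ lowerLevels L k) : G.Adj x t ↔ G.Adj y t := by
  cases k with
  | zero => simp [lowerLevels] at ht
  | succ k =>
    rw [G.adj_comm x, G.adj_comm y]
    obtain ht | ht := mem_lowerLevels_succ.1 ht
    · exact iff_of_false (h.not_adj_of_mem_lowerLevels ht hx) (h.not_adj_of_mem_lowerLevels ht hy)
    · simpa [IsParent, ht] using hpar k (by lia) x hx y hy hxy t

end IsLevelling

/-- A choice of a parent `g i ∈ L k` for each `f i` that is adjacent to no other `f j`. -/
structure IsPrivateParents (G : SimpleGraph V) (L : ℕ → Set V) (k : ℕ) {ι : Type*}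
    (f g : ι → V) : Prop where
  mem : ∀ i, g i ∈ L k
  adj_iff : ∀ i j, G.Adj (g i) (f j) ↔ i = j

theorem IsPrivateParents.isParent {ι : Type*} {f g : ι → V} (hg : IsPrivateParents G L k f g)
    (i : ι) : IsParent G L k (g i) (f i) :=
  ⟨hg.mem i, (hg.adj_iff i i).2 rfl⟩

theorem IsPrivateParents.not_adj {ι : Type*} {f g : ι → V} (hg : IsPrivateParents G L k f g)
    {i j : ι} (hij : i ≠ j) : ¬ G.Adj (g i) (f j) :=
  fun h => hij ((hg.adj_iff i j).1 h)

theorem IsPrivateParents.injective {ι : Type*} {f g : ι → V} (hg : IsPrivateParents G L k f g) :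
    Function.Injective g :=
  fun i j hij => (hg.adj_iff i j).1 (hij ▸ (hg.isParent j).2)

/-- The vertices `f i` form a stable set of `L k` with well defined lower parities, and the graph
of odd connections between them is `F`. No injectivity of `f` is required. -/
structure IsOddRealization (G : SimpleGraph V) (L : ℕ → Set V) (k : ℕ) {ι : Type*}
    (F : SimpleGraph ι) (f : ι → V) : Prop where
  mem : ∀ i, f i ∈ L k
  not_adj : ∀ i j, ¬ G.Adj (f i) (f j)
  hasLowerParity : ∀ i j, HasLowerParity G L k (f i) (f j)
  oddConn_iff : ∀ i j, OddConn G L k (f i) (f j) ↔ F.Adj i j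

namespace IsOddRealization

section CommonParents

variable {ι : Type*} {F : SimpleGraph ι} {f : ι → V} {i j l : ι} {x y : V}

theorem not_adj_of_common_parent (hf : IsOddRealization G L (k + 1) F f)
    (hlev : IsLevelling G (k + 1) L) (hi : IsParent G L k x (f i)) (hj : IsParent G L k x (f j)) :
    ¬ F.Adj i j := by
  intro hij
  have hodd := (hf.oddConn_iff i j).2 hij
  obtain ⟨p, hp, hlen⟩ := hlev.exists_isLowerPath_length_two (hf.mem i) (hf.mem j) hodd.1
    (hf.not_adj i j) hi hj
  rw [(hf.hasLowerParity i j).oddConn_iff hp, hlen] at hodd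
  exact absurd hodd (by decide)

theorem hasLowerParity_parents (hf : IsOddRealization G L (k + 1) F f)
    (hlev : IsLevelling G (k + 1) L) (hxi : IsParent G L k x (f i)) (hyj : IsParent G L k y (f j))
    (hxj : ¬ G.Adj x (f j)) (hyi : ¬ G.Adj y (f i)) : HasLowerParity G L k x y := by
  intro p q hp hq
  obtain ⟨p', hp', hplen⟩ := hlev.exists_isLowerPath_length_add_two (hf.mem i) (hf.mem j)
    (hf.not_adj i j) hxi hyj hxj hyi hp
  obtain ⟨q', hq', hqlen⟩ := hlev.exists_isLowerPath_length_add_two (hf.mem i) (hf.mem j)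
    (hf.not_adj i j) hxi hyj hxj hyi hq
  simpa [hplen, hqlen, Nat.odd_add] using hf.hasLowerParity i j p' q' hp' hq'

theorem oddConn_parents_iff (hf : IsOddRealization G L (k + 1) F f)
    (hlev : IsLevelling G (k + 1) L) (hxi : IsParent G L k x (f i)) (hyj : IsParent G L k y (f j))
    (hxj : ¬ G.Adj x (f j)) (hyi : ¬ G.Adj y (f i)) : OddConn G L k x y ↔ F.Adj i j := by
  obtain ⟨p, hp⟩ := (hlev.mono k.le_succ).exists_isLowerPath hxi.1 hyj.1
  obtain ⟨q, hq, hlen⟩ := hlev.exists_isLowerPath_length_add_two (hf.mem i) (hf.mem j)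
    (hf.not_adj i j) hxi hyj hxj hyi hp
  rw [← hf.oddConn_iff, (hf.hasLowerParity i j).oddConn_iff hq,
    (hf.hasLowerParity_parents hlev hxi hyj hxj hyi).oddConn_iff hp, hlen]
  simp [Nat.odd_add]

-- Otherwise `y` is private to `l` and `x` to each of `i`, `j`, so that the parity of the paths
-- from `x` to `y` decides both adjacencies.
theorem isParent_of_common_parent (hf : IsOddRealization G L (k + 1) F f)
    (hlev : IsLevelling G (k + 1) L) (hi : IsParent G L k x (f i)) (hj : IsParent G L k x (f j))
    (hil : F.Adj i l) (hjl : ¬ F.Adj j l) (hy : IsParent G L k y (f l)) :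
    IsParent G L k y (f j) := by
  by_contra hyj
  have hxl : ¬ G.Adj x (f l) := fun h => hf.not_adj_of_common_parent hlev hi ⟨hi.1, h⟩ hil
  have hyi : ¬ G.Adj y (f i) := fun h => hf.not_adj_of_common_parent hlev ⟨hy.1, h⟩ hy hil
  have hyj : ¬ G.Adj y (f j) := fun h => hyj ⟨hy.1, h⟩
  exact hjl ((hf.oddConn_parents_iff hlev hj hy hxl hyj).1
    ((hf.oddConn_parents_iff hlev hi hy hxl hyi).2 hil))

end CommonParents

section PrivateParents

variable {ι : Type*} {F : SimpleGraph ι} {f g : ι → V}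

theorem oddConn_privateParents_iff (hf : IsOddRealization G L (k + 1) F f)
    (hlev : IsLevelling G (k + 1) L) (hg : IsPrivateParents G L k f g) (i j : ι) :
    OddConn G L k (g i) (g j) ↔ F.Adj i j := by
  obtain rfl | hij := eq_or_ne i j
  · exact iff_of_false (fun h => h.1 rfl) F.irrefl
  · exact hf.oddConn_parents_iff hlev (hg.isParent i) (hg.isParent j) (hg.not_adj hij)
      (hg.not_adj hij.symm)

theorem privateParents (hf : IsOddRealization G L (k + 1) F f) (hlev : IsLevelling G (k + 1) L)
    (hg : IsPrivateParents G L k f g) (hstable : ∀ i j, ¬ G.Adj (g i) (g j)) :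
    IsOddRealization G L k F g where
  mem := hg.mem
  not_adj := hstable
  hasLowerParity i j := by
    obtain rfl | hij := eq_or_ne i j
    · exact hasLowerParity_self _
    · exact hf.hasLowerParity_parents hlev (hg.isParent i) (hg.isParent j) (hg.not_adj hij)
        (hg.not_adj hij.symm)
  oddConn_iff := hf.oddConn_privateParents_iff hlev hg

theorem adj_of_adj_privateParents (hf : IsOddRealization G L (k + 1) F f)
    (hlev : IsLevelling G (k + 1) L) (hg : IsPrivateParents G L k f g) {i j : ι}
    (hij : G.Adj (g i) (g j)) : F.Adj i j :=
  (hf.oddConn_privateParents_iff hlev hg i j).1 (oddConn_of_adj hij)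

-- If `g j`, `g l` were not adjacent, then `g l` would be joined to the twins `g i`, `g j` by paths
-- of the same parity.
theorem adj_privateParents_of_adj_of_not_adj (hf : IsOddRealization G L (k + 1) F f)
    (hlev : IsLevelling G (k + 1) L) (hpar : AdjacentSameParents G L (k + 1))
    (hg : IsPrivateParents G L k f g) {i j l : ι} (hij : G.Adj (g i) (g j)) (hjl : F.Adj j l)
    (hil : ¬ F.Adj i l) (hne : i ≠ l) : G.Adj (g j) (g l) := by
  by_contra hjl'
  have hlev' := hlev.mono k.le_succ
  have hil' : ¬ G.Adj (g i) (g l) := fun h => hil (hf.adj_of_adj_privateParents hlev hg h)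
  obtain ⟨hjl_ne, p, hp, hodd, hint⟩ := (hf.oddConn_privateParents_iff hlev hg j l).2 hjl
  obtain ⟨q, hq, hlen⟩ := IsLowerPath.exists_replace_start ⟨hp, hint⟩
    (fun t ht => hlev'.adj_iff_adj_of_mem_lowerLevels hpar (hg.mem j) (hg.mem i) hij.symm ht)
    (hlev'.notMem_lowerLevels (hg.mem i)) hjl_ne (hg.injective.ne hne) hjl' hil'
  exact hil ((hf.oddConn_privateParents_iff hlev hg i l).1
    (oddConn_iff_exists_isLowerPath.2 ⟨q, hq, hlen ▸ hodd⟩))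

end PrivateParents

section PathGraph

variable {f g : Fin 4 → V} {i j : Fin 4} {x : V}

theorem not_common_parent_zero_two (hf : IsOddRealization G L (k + 1) (pathGraph 4) f)
    (hlev : IsLevelling G (k + 1) L) (h0 : IsParent G L k x (f 0)) : ¬ IsParent G L k x (f 2) := by
  intro h2
  obtain ⟨y, hy3⟩ := hlev.exists_isParent (hf.mem 3)
  obtain ⟨z, hz1⟩ := hlev.exists_isParent (hf.mem 1)
  have hy0 : IsParent G L k y (f 0) :=
    hf.isParent_of_common_parent hlev h2 h0 (by simp [pathGraph_adj]) (by simp [pathGraph_adj]) hy3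
  have hz3 : IsParent G L k z (f 3) :=
    hf.isParent_of_common_parent hlev hy0 hy3 (by simp [pathGraph_adj]) (by simp [pathGraph_adj])
      hz1
  have hz0 : IsParent G L k z (f 0) :=
    hf.isParent_of_common_parent hlev h2 h0 (by simp [pathGraph_adj]) (by simp [pathGraph_adj]) hz3
  exact hf.not_adj_of_common_parent hlev hz0 hz1 (by simp [pathGraph_adj])

theorem pathGraph_rev (hf : IsOddRealization G L k (pathGraph 4) f) :
    IsOddRealization G L k (pathGraph 4) (f ∘ Fin.rev) where
  mem i := hf.mem i.rev
  not_adj i j := hf.not_adj i.rev j.rev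
  hasLowerParity i j := hf.hasLowerParity i.rev j.rev
  oddConn_iff i j := by
    rw [Function.comp_apply, Function.comp_apply, hf.oddConn_iff, pathGraph_adj, pathGraph_adj]
    simp only [Fin.val_rev]
    lia

theorem not_common_parent_one_three (hf : IsOddRealization G L (k + 1) (pathGraph 4) f)
    (hlev : IsLevelling G (k + 1) L) (h1 : IsParent G L k x (f 1)) : ¬ IsParent G L k x (f 3) :=
  fun h3 => hf.pathGraph_rev.not_common_parent_zero_two hlev h3 h1

theorem not_common_parent_zero_three (hf : IsOddRealization G L (k + 1) (pathGraph 4) f)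
    (hlev : IsLevelling G (k + 1) L) (h0 : IsParent G L k x (f 0)) : ¬ IsParent G L k x (f 3) := by
  intro h3
  obtain ⟨y, hy1⟩ := hlev.exists_isParent (hf.mem 1)
  exact hf.not_common_parent_one_three hlev hy1
    (hf.isParent_of_common_parent hlev h0 h3 (by simp [pathGraph_adj]) (by simp [pathGraph_adj])
      hy1)

theorem eq_of_common_parent (hf : IsOddRealization G L (k + 1) (pathGraph 4) f)
    (hlev : IsLevelling G (k + 1) L) (hi : IsParent G L k x (f i)) (hj : IsParent G L k x (f j)) :
    i = j := by
  have hadj : ¬ (pathGraph 4).Adj i j := hf.not_adj_of_common_parent hlev hi hj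
  have h02 := hf.not_common_parent_zero_two hlev (x := x)
  have h13 := hf.not_common_parent_one_three hlev (x := x)
  have h03 := hf.not_common_parent_zero_three hlev (x := x)
  fin_cases i <;> fin_cases j <;> simp_all [pathGraph_adj]

theorem exists_isPrivateParents (hf : IsOddRealization G L (k + 1) (pathGraph 4) f)
    (hlev : IsLevelling G (k + 1) L) : ∃ g, IsPrivateParents G L k f g := by
  choose g hg using fun i => hlev.exists_isParent (hf.mem i)
  exact ⟨g, fun i => (hg i).1, fun i j =>
    ⟨fun hij => hf.eq_of_common_parent hlev (hg i) ⟨(hg i).1, hij⟩, fun hij => hij ▸ (hg i).2⟩⟩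

theorem not_adj_privateParents_one_two (hf : IsOddRealization G L (k + 1) (pathGraph 4) f)
    (hlev : IsLevelling G (k + 1) L) (hpar : AdjacentSameParents G L (k + 1))
    (hg : IsPrivateParents G L k f g) : ¬ G.Adj (g 1) (g 2) := by
  intro h12
  have hsub {i j : Fin 4} (hij : ¬ (pathGraph 4).Adj i j) : ¬ G.Adj (g i) (g j) :=
    fun h => hij (hf.adj_of_adj_privateParents hlev hg h)
  have h23 : G.Adj (g 2) (g 3) := hf.adj_privateParents_of_adj_of_not_adj hlev hpar hg h12
    (by simp [pathGraph_adj]) (by simp [pathGraph_adj]) (by decide)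
  have h10 : G.Adj (g 1) (g 0) := hf.adj_privateParents_of_adj_of_not_adj hlev hpar hg h12.symm
    (by simp [pathGraph_adj]) (by simp [pathGraph_adj]) (by decide)
  have h02 : ¬ G.Adj (g 0) (g 2) := hsub (by simp [pathGraph_adj])
  have h03 : ¬ G.Adj (g 0) (g 3) := hsub (by simp [pathGraph_adj])
  have h13 : ¬ G.Adj (g 1) (g 3) := hsub (by simp [pathGraph_adj])
  have hpath : IsInducedPath G (.cons h10.symm (.cons h12 (.cons h23 .nil))) := by
    simp only [isInducedPath_cons, IsInducedPath.nil, Walk.support_cons, Walk.support_nil,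
      List.mem_cons, List.not_mem_nil, or_false, true_and]
    grind [G.adj_comm, G.irrefl]
  have hne : f 0 ≠ f 3 := fun h =>
    hg.not_adj (show (0 : Fin 4) ≠ 3 by decide) (h ▸ (hg.isParent 0).2)
  obtain ⟨q, hq, hlen⟩ := hpath.exists_isLowerPath_of_ends
    (by simp [(hg.isParent _).mem_lowerLevels]) (hlev.notMem_lowerLevels (hf.mem 0))
    (hlev.notMem_lowerLevels (hf.mem 3)) hne (hf.not_adj 0 3)
    (by simp [G.adj_comm (f 0), hg.adj_iff, hg.injective.eq_iff])
    (by simp [hg.adj_iff, hg.injective.eq_iff])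
  have hodd : OddConn G L (k + 1) (f 0) (f 3) :=
    oddConn_iff_exists_isLowerPath.2 ⟨q, hq, hlen ▸ (by decide : Odd 5)⟩
  simpa [pathGraph_adj] using (hf.oddConn_iff 0 3).1 hodd

theorem not_adj_privateParents (hf : IsOddRealization G L (k + 1) (pathGraph 4) f)
    (hlev : IsLevelling G (k + 1) L) (hpar : AdjacentSameParents G L (k + 1))
    (hg : IsPrivateParents G L k f g) (i j : Fin 4) : ¬ G.Adj (g i) (g j) := by
  have h12 := hf.not_adj_privateParents_one_two hlev hpar hg
  have h01 : ¬ G.Adj (g 0) (g 1) := fun h => h12 <|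
    hf.adj_privateParents_of_adj_of_not_adj hlev hpar hg h
      (by simp [pathGraph_adj]) (by simp [pathGraph_adj]) (by decide)
  have h32 : ¬ G.Adj (g 3) (g 2) := fun h => h12 <| Adj.symm <|
    hf.adj_privateParents_of_adj_of_not_adj hlev hpar hg h
      (by simp [pathGraph_adj]) (by simp [pathGraph_adj]) (by decide)
  intro h
  have hij := hf.adj_of_adj_privateParents hlev hg h
  have hsymm := h.symm
  fin_cases i <;> fin_cases j <;> simp_all [pathGraph_adj]

end PathGraph

end IsOddRealization

theorem IsLevelling.not_isOddRealization_pathGraph_four (hlev : IsLevelling G k L)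
    (hpar : AdjacentSameParents G L k) (f : Fin 4 → V) :
    ¬ IsOddRealization G L k (pathGraph 4) f := by
  induction k generalizing f with
  | zero =>
    intro hf
    obtain ⟨r, hr⟩ := hlev.2.1
    have hroot (i : Fin 4) : f i = r := by simpa [hr] using hf.mem i
    exact ((hf.oddConn_iff 0 1).2 (by simp [pathGraph_adj])).1 ((hroot 0).trans (hroot 1).symm)
  | succ k ih =>
    intro hf
    obtain ⟨g, hg⟩ := hf.exists_isPrivateParents hlev
    exact ih (hlev.mono k.le_succ) (hpar.mono k.le_succ) g
      (hf.privateParents hlev hg (hf.not_adj_privateParents hlev hpar hg))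

theorem stmt5_general (G : SimpleGraph V) (k : ℕ) (L : ℕ → Set V)
    (hlev : IsLevelling G k L)
    (hstable : ∀ x ∈ L k, ∀ y ∈ L k, ¬ G.Adj x y)
    (hparity : ∀ u ∈ L k, ∀ v ∈ L k, ∀ p q : G.Walk u v,
       IsInducedPath G p → InteriorIn G p (lowerLevels L k) →
       IsInducedPath G q → InteriorIn G q (lowerLevels L k) →
       (Odd p.length ↔ Odd q.length))
    (hparent : ∀ i, 1 ≤ i → i ≤ k - 1 → ∀ u ∈ L i, ∀ v ∈ L i, G.Adj u v →
       ∀ w ∈ L (i - 1), (G.Adj w u ↔ G.Adj w v))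
    (H : SimpleGraph V)
    (hH : ∀ u v, H.Adj u v ↔ (u ∈ L k ∧ v ∈ L k ∧ OddConn G L k u v)) :
    IsCograph H := by
  rw [isCograph_iff_not_isIndContained_pathGraph]
  rintro ⟨φ⟩
  have hpar : AdjacentSameParents G L k := fun i hi u hu v hv huv w =>
    and_congr_right fun hw => hparent (i + 1) (by lia) (by lia) u hu v hv huv w hw
  have hmem (i : Fin 4) : φ i ∈ L k := by
    obtain ⟨j, hij⟩ := (pathGraph_connected 3).preconnected.exists_adj_of_nontrivial i
    exact ((hH _ _).1 (φ.map_adj_iff.2 hij)).1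
  exact hlev.not_isOddRealization_pathGraph_four hpar φ
    { mem := hmem
      not_adj := fun i j => hstable _ (hmem i) _ (hmem j)
      hasLowerParity := fun i j p q hp hq =>
        hparity _ (hmem i) _ (hmem j) p q hp.1 hp.2 hq.1 hq.2
      oddConn_iff := fun i j => by
        rw [← φ.map_adj_iff, hH]
        simp only [hmem, true_and] }

theorem stmt5 [Fintype V] (G : SimpleGraph V) (k : ℕ) (L : ℕ → Set V)
    (hlev : IsLevelling G k L)
    (hstable : ∀ x ∈ L k, ∀ y ∈ L k, ¬ G.Adj x y)
    (hparity : ∀ u ∈ L k, ∀ v ∈ L k, ∀ p q : G.Walk u v,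
       IsInducedPath G p → InteriorIn G p (lowerLevels L k) →
       IsInducedPath G q → InteriorIn G q (lowerLevels L k) →
       (Odd p.length ↔ Odd q.length))
    (hparent : ∀ i, 1 ≤ i → i ≤ k - 1 → ∀ u ∈ L i, ∀ v ∈ L i, G.Adj u v →
       ∀ w ∈ L (i - 1), (G.Adj w u ↔ G.Adj w v))
    (H : SimpleGraph V)
    (hH : ∀ u v, H.Adj u v ↔ (u ∈ L k ∧ v ∈ L k ∧ OddConn G L k u v)) :
    IsCograph H :=
  stmt5_general G k L hlev hstable hparity hparent H hH
end
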